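/- arXiv:2211.05460 — 3 statements merged into one kernel-verified Lean document; each statement's English description precedes it below -/
import Mathlib

section
/- For every integer k ≥ 2, the following identity of formal power series in x over ℤ holds: (1 − 2x + x^{k+1})² · Σ_{n≥1} ( Σ_{w ∈ F_{n,k}} ver(w) ) xⁿ = 10x − 9x² − 3(1 + k)·x^{k} − (4 − 3k)·x^{k+1} + 8x^{k+2} − 2x^{2k+2}. In other words, the generating function for the total number of vertices of all k-bonacci graphs on words of length n is V_k(x) = (10x − 9x² − 3(1+k)x^k − (4−3k)x^{k+1} + 8x^{k+2} − 2x^{2k+2})/(1 − 2x + x^{k+1})². -/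
open Finset

/-- Number of `1`s in a binary word. -/
def wOnes (w : List Bool) : ℕ := w.count true

/-- Number of maximal runs (blocks) of consecutive `1`s in a binary word. -/
def wRuns (w : List Bool) : ℕ := w.count true - (w.zip w.tail).count (true, true)

/-- The set `F_{n,k}` of binary words of length `n` avoiding `k` consecutive `1`s. -/
def kbonWords (n k : ℕ) : Finset (Fin n → Bool) :=
  Finset.univ.filter (fun w => ¬ (List.replicate k true <:+: List.ofFn w))

/-- Number of vertices of the `k`-bonacci graph of a word `w` of length `n`:
`ver(w) = 2n + 2 + s(w) + b(w)`. -/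
def wVer (n : ℕ) (w : List Bool) : ℕ := 2 * n + 2 + wOnes w + wRuns w

open PowerSeries in
/-- Generating function of a statistic on binary words. -/
noncomputable def GW (f : List Bool → ℤ) : PowerSeries ℤ :=
  PowerSeries.mk (fun n => ∑ w : Fin n → Bool, f (List.ofFn w))

theorem sum_words_succ (n : ℕ) (f : List Bool → ℤ) :
    ∑ w : Fin (n+1) → Bool, f (List.ofFn w) =
      (∑ w : Fin n → Bool, f (true :: List.ofFn w)) +
      ∑ w : Fin n → Bool, f (false :: List.ofFn w) := by
  rw [← (Fin.consEquiv (fun _ : Fin (n+1) => Bool)).sum_comp, Fintype.sum_prod_type,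
    Fintype.sum_bool]
  simp [Fin.consEquiv, List.ofFn_cons]

theorem GW_rec (f : List Bool → ℤ) :
    GW f = PowerSeries.C (f []) + PowerSeries.X * (GW (fun w => f (true :: w)) +
      GW (fun w => f (false :: w))) := by
  ext n
  cases n with
  | zero => simp [GW]
  | succ n =>
    rw [map_add, PowerSeries.coeff_succ_X_mul]
    rw [PowerSeries.coeff_C, if_neg (Nat.succ_ne_zero n), zero_add, map_add]
    simp only [GW, PowerSeries.coeff_mk]
    exact sum_words_succ n f

theorem GW_add (f g : List Bool → ℤ) : GW (fun w => f w + g w) = GW f + GW g := by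
  ext n
  simp [GW, Finset.sum_add_distrib]

theorem GW_zero : GW (fun _ => 0) = 0 := by
  ext n
  simp [GW]

/-- Indicator: no run longer than `m` (and at most `r` leading ones). -/
def ind (m : ℕ) : ℕ → List Bool → ℤ
  | _, [] => 1
  | _, false :: w => ind m m w
  | 0, true :: _ => 0
  | r + 1, true :: w => ind m r w

/-- Ones plus runs, with the flag saying whether the preceding letter is one. -/
def stat : Bool → List Bool → ℤ
  | _, [] => 0
  | _, false :: w => stat false w
  | false, true :: w => 2 + stat true w
  | true, true :: w => 1 + stat true w

theorem zip_count_le (w : List Bool) :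
    (w.zip w.tail).count (true, true) ≤ w.count true := by
  induction w with
  | nil => simp
  | cons a w ih =>
    cases w with
    | nil => simp
    | cons b w => 
      cases a <;> cases b <;> simp [List.count_cons] at * <;> omega

theorem stat_eq (w : List Bool) : ∀ b : Bool,
    stat b w = 2 * (w.count true : ℤ) - ((w.zip w.tail).count (true, true) : ℤ)
      - (if b = true ∧ w.head? = some true then 1 else 0) := by
  induction w with
  | nil => intro b; simp [stat]
  | cons a w ih =>
    intro c
    cases w with
    | nil => cases a <;> cases c <;> simp [stat]
    | cons b w =>
      cases a <;> cases b <;> cases c <;>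
        simp only [stat.eq_2, stat.eq_3, stat.eq_4, ih] <;> 
        simp [List.count_cons] <;> ring

theorem wVer_eq (n : ℕ) (w : List Bool) : (wVer n w : ℤ) = 2 * n + 2 + stat false w := by
  have := zip_count_le w
  rw [stat_eq]
  simp only [wVer, wOnes, wRuns]
  push_cast [Nat.cast_sub this]
  simp; ring

theorem ind_eq (m : ℕ) (w : List Bool) : ∀ r ≤ m, ind m r w =
    if ¬ (List.replicate (r+1) true <+: w) ∧ ¬ (List.replicate (m+1) true <:+: w) then 1 else 0 := by
  induction w with
  | nil => intro r hr; simp [ind, List.replicate_succ]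
  | cons a w ih =>
    intro r hr
    cases a with
    | false =>
      rw [show ind m r (false :: w) = ind m m w by cases r <;> rfl, ih m le_rfl]
      congr 1
      simp only [List.infix_cons_iff, List.replicate_succ, List.cons_prefix_cons, eq_iff_iff]
      simp
      intro h h'
      exact h (by simpa [List.replicate_succ] using h'.isInfix)
    | true =>
      cases r with
      | zero => simp [ind, List.replicate_succ]
      | succ r =>
        rw [show ind m (r+1) (true :: w) = ind m r w by rfl, ih r (by omega)]
        congr 1
        rw [List.infix_cons_iff, List.replicate_succ (n := r+1), List.cons_prefix_cons]
        simp only [eq_iff_iff, true_and]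
        constructor
        · rintro ⟨h1, h2⟩
          refine ⟨h1, ?_⟩
          rintro (h | h)
          · rw [List.replicate_succ, List.cons_prefix_cons] at h
            apply h1
            refine List.IsPrefix.trans ?_ h.2
            rw [List.prefix_replicate_iff]
            simp; omega
          · exact h2 h
        · rintro ⟨h1, h2⟩
          exact ⟨h1, fun h => h2 (Or.inr h)⟩

theorem ind_top (m : ℕ) (w : List Bool) : ind m m w =
    if ¬ (List.replicate (m+1) true <:+: w) then 1 else 0 := by
  rw [ind_eq m w m le_rfl]
  congr 1
  simp only [eq_iff_iff]
  exact ⟨fun h => h.2, fun h => ⟨fun h' => h h'.isInfix, h⟩⟩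

open PowerSeries in
theorem N_rec (m r : ℕ) : (1 - X) * GW (ind m r) = (1 + X * GW (ind m m)) * (1 - X ^ (r+1)) := by
  induction r with
  | zero =>
    rw [GW_rec (ind m 0)]
    simp only [ind, GW_zero, map_one]
    ring
  | succ r ih =>
    rw [GW_rec (ind m (r+1))]
    simp only [ind, map_one]
    linear_combination X * ih

open PowerSeries in
theorem S_rec (m r : ℕ) : (1 - X : PowerSeries ℤ) ^ 2 * GW (fun w => ind m r w * stat true w) =
    (1 - X) * X * GW (fun w => ind m m w * stat false w) * (1 - X ^ (r+1)) +
    (1 + X * GW (ind m m)) * (X - ((r : PowerSeries ℤ) +1) * X ^ (r+1) + (r : PowerSeries ℤ) * X ^ (r+2)) := by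
  induction r with
  | zero =>
    rw [GW_rec (fun w => ind m 0 w * stat true w)]
    simp only [ind, stat, zero_mul, mul_zero, GW_zero, map_zero]
    push_cast
    ring
  | succ r ih =>
    rw [GW_rec (fun w => ind m (r+1) w * stat true w)]
    simp only [ind, stat, mul_zero, map_zero, mul_add, mul_one, GW_add]
    have h := N_rec m r
    push_cast
    linear_combination X * ih + X * (1 - X) * h

open PowerSeries in
theorem S_top (m : ℕ) : (1 - X) * GW (fun w => ind (m+1) (m+1) w * stat false w) =
    X * (2 * GW (ind (m+1) m) + GW (fun w => ind (m+1) m w * stat true w)) := by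
  have := GW_rec (fun w => ind (m+1) (m+1) w * stat false w)
  simp only [ind, stat, mul_zero, map_zero, mul_add, GW_add] at this
  have h2 : GW (fun w => ind (m+1) m w * 2) = 2 * GW (ind (m+1) m) := by
    rw [two_mul, ← GW_add]; congr 1; ext w; ring
  rw [h2] at this
  linear_combination this

open PowerSeries in
theorem V_eq (m : ℕ) : PowerSeries.mk (fun n =>
          if n = 0 then 0 else ∑ w ∈ kbonWords n (m+1), (wVer n (List.ofFn w) : ℤ)) =
    2 * X * derivative ℤ (GW (ind m m)) + 2 * GW (ind m m) +
      GW (fun w => ind m m w * stat false w) - 2 := by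
  have h (n : ℕ) : ∑ w ∈ kbonWords n (m+1), (wVer n (List.ofFn w) : ℤ) =
      2 * (n * coeff n (GW (ind m m))) + 2 * coeff n (GW (ind m m)) +
        coeff n (GW (fun w => ind m m w * stat false w)) := by
    simp only [GW, coeff_mk, kbonWords, Finset.sum_filter, Finset.mul_sum, ← Finset.sum_add_distrib]
    refine Finset.sum_congr rfl fun w _ => ?_
    rw [ind_top, wVer_eq]
    split_ifs <;> ring
  have e2 : (2 : PowerSeries ℤ) = C 2 := by simp
  ext n
  rw [e2, mul_assoc, map_sub, map_add, map_add, coeff_C_mul, coeff_C_mul, coeff_mk, coeff_C]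
  cases n with
  | zero => simp [GW, ind, stat]
  | succ n =>
    rw [h, coeff_succ_X_mul, coeff_derivative]
    simp
    ring

theorem total_vertices_gf (k : ℕ) (hk : 2 ≤ k) :
    (1 - 2 * PowerSeries.X + PowerSeries.X ^ (k + 1)) ^ 2
      * PowerSeries.mk (fun n =>
          if n = 0 then 0 else ∑ w ∈ kbonWords n k, (wVer n (List.ofFn w) : ℤ))
    = PowerSeries.C (R := ℤ) 10 * PowerSeries.X
        - PowerSeries.C (R := ℤ) 9 * PowerSeries.X ^ 2
        - PowerSeries.C (R := ℤ) (3 * (1 + (k : ℤ))) * PowerSeries.X ^ k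
        - PowerSeries.C (R := ℤ) (4 - 3 * (k : ℤ)) * PowerSeries.X ^ (k + 1)
        + PowerSeries.C (R := ℤ) 8 * PowerSeries.X ^ (k + 2)
        - PowerSeries.C (R := ℤ) 2 * PowerSeries.X ^ (2 * k + 2) := by
  obtain ⟨m, rfl⟩ : ∃ m, k = m + 2 := ⟨k - 2, by omega⟩
  rw [V_eq (m+1)]
  have hN := N_rec (m+1) (m+1)
  have hN' := N_rec (m+1) m
  have hS := S_rec (m+1) m
  have hT := S_top m
  set N := GW (ind (m+1) (m+1)) with hNdef
  set S := GW (fun w => ind (m+1) (m+1) w * stat false w)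
  set A := GW (ind (m+1) m)
  set B := GW (fun w => ind (m+1) m w * stat true w)
  have hD : (1 - 2 * PowerSeries.X + PowerSeries.X ^ (m+3)) * N =
      1 - PowerSeries.X ^ (m+2) := by
    linear_combination hN
  have hDd := congrArg (PowerSeries.derivative ℤ) hD
  have e2 : PowerSeries.derivative ℤ (2 : PowerSeries ℤ) = 0 := by
    simpa using PowerSeries.derivative_C (R := ℤ) (r := 2)
  simp only [Derivation.leibniz, map_add, map_sub, Derivation.leibniz_pow, smul_eq_mul,
    PowerSeries.derivative_X, Derivation.map_one_eq_zero, nsmul_eq_mul, e2] at hDd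
  have hx : (1 - PowerSeries.X : PowerSeries ℤ) ≠ 0 := by
    intro h
    simpa using congrArg PowerSeries.constantCoeff h
  set N' := PowerSeries.derivative ℤ N
  simp only [Nat.add_sub_cancel, show m + 3 - 1 = m + 2 by omega,
    show m + 2 - 1 = m + 1 by omega] at hDd
  apply mul_left_cancel₀ hx
  simp only [map_mul, map_sub, map_add, map_one, map_ofNat, map_natCast, Nat.cast_add,
    Nat.cast_ofNat] 
  push_cast at hDd
  generalize (PowerSeries.X : PowerSeries ℤ) = x at *
  generalize (m : PowerSeries ℤ) = c at *
  have hDS : (1 - x) * (1 - 2 * x + x ^ (m+3)) * S = (1 + x * N) *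
      (2 * x * (1-x) * (1 - x^(m+1)) + x * (x - (c+1) * x^(m+1) + c * x^(m+2))) := by
    linear_combination (1-x)^2 * hT + 2 * x * (1-x) * hN' + x * hS
  linear_combination 2 * x * (1-x) * (1 - 2 * x + x ^ (m+3)) * hDd
    - 2 * x * (1-x) * (-2 + (c+3) * x^(m+2)) * hD
    + 2 * (1-x) * (1 - 2 * x + x ^ (m+3)) * hD
    + (1 - 2 * x + x ^ (m+3)) * hDS
    + x * (2 * x * (1-x) * (1 - x^(m+1)) + x * (x - (c+1) * x^(m+1) + c * x^(m+2))) * hD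
end

section
/- For every integer k ≥ 2, the following identity of formal power series in x over ℤ holds: (1 − 2x + x^{k+1})² · Σ_{n≥1} ( Σ_{w ∈ F_{n,k}} deg₂(w) ) xⁿ = 2·(4x − 7x² − 2x^{k} + x^{k+1} + 7x^{k+2} − x^{2k+1} − 2x^{2k+2}). In other words, the generating function for the total number of degree-2 vertices in all k-bonacci graphs on words of length n is D_k^{(2)}(x) = 2(4x − 7x² − 2x^k + x^{k+1} + 7x^{k+2} − x^{2k+1} − 2x^{2k+2})/(1 − 2x + x^{k+1})². -/
open Finset

/-- Indicator of `w₁ = c` (first letter). -/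
def indHead (c : Bool) (w : List Bool) : ℕ := if w.head? = some c then 1 else 0

/-- Indicator of `wₙ = c` (last letter). -/
def indLast (c : Bool) (w : List Bool) : ℕ := if w.getLast? = some c then 1 else 0

/-- Number of degree-2 vertices: `deg₂(w) = 2 + 2b(w) + [w₁ = 0] + [wₙ = 0]`. -/
def wDeg2 (w : List Bool) : ℕ := 2 + 2 * wRuns w + indHead false w + indLast false w

/-- Number of degree-4 vertices: `deg₄(w) = 2b(w) − [w₁ = 1] − [wₙ = 1]`. -/
def wDeg4 (w : List Bool) : ℕ := 2 * wRuns w - indHead true w - indLast true w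

/-- Number of degree-3 vertices: `deg₃(w) = ver(w) − deg₂(w) − deg₄(w)`. -/
def wDeg3 (n : ℕ) (w : List Bool) : ℕ := wVer n w - wDeg2 w - wDeg4 w

/-- Auxiliary weighted sum over words `w` such that `1^j w` avoids `1^k`. -/
def auxT (k j n : ℕ) (f : List Bool → ℤ) : ℤ :=
  ∑ w : Fin n → Bool,
    if (List.replicate k true <:+: List.replicate j true ++ List.ofFn w) then 0 else f (List.ofFn w)

/-- New runs of ones in a word preceded by letter `c`. -/
def auxG : Bool → List Bool → ℕ
  | _, [] => 0
  | _, false :: w => auxG false w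
  | c, true :: w => (if c then 0 else 1) + auxG true w

/-- Indicator that the last letter is zero. -/
def auxL (w : List Bool) : ℤ := (indLast false w : ℤ)

lemma aux_prefix (w : List Bool) : ∀ (j k : ℕ), j < k →
    ¬ (List.replicate k true <+: List.replicate j true ++ false :: w) := by
  intro j
  induction j with
  | zero =>
    intro k hk h
    obtain ⟨m, rfl⟩ : ∃ m, k = m + 1 := ⟨k - 1, by omega⟩
    simp [List.replicate_succ, List.cons_prefix_cons] at h
  | succ j ih =>
    intro k hk h
    obtain ⟨m, rfl⟩ : ∃ m, k = m + 1 := ⟨k - 1, by omega⟩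
    simp only [List.replicate_succ, List.cons_append, List.cons_prefix_cons, true_and] at h
    exact ih m (by omega) h

lemma aux_infix (w : List Bool) (k : ℕ) : ∀ (j : ℕ), j < k →
    ((List.replicate k true <:+: List.replicate j true ++ false :: w) ↔
      List.replicate k true <:+: w) := by
  intro j
  induction j with
  | zero =>
    intro hk
    have := aux_prefix w 0 k hk
    simp only [List.replicate_zero, List.nil_append] at this ⊢
    rw [List.infix_cons_iff]
    tauto
  | succ j ih =>
    intro hk
    have := aux_prefix w (j+1) k hk
    rw [List.replicate_succ, List.cons_append] at this ⊢
    rw [List.infix_cons_iff, ih (by omega)]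
    tauto

lemma auxT_succ (k j n : ℕ) (hj : j < k) (f : List Bool → ℤ) :
    auxT k j (n+1) f = auxT k 0 n (fun w => f (false :: w))
      + auxT k (j+1) n (fun w => f (true :: w)) := by
  unfold auxT
  rw [← (Fin.consEquiv (fun _ : Fin (n+1) => Bool)).sum_comp, Fintype.sum_prod_type,
    Fintype.sum_bool, add_comm]
  congr 1
  · apply Finset.sum_congr rfl
    intro w _
    simp [Fin.consEquiv, List.ofFn_succ, aux_infix _ k j hj]
  · apply Finset.sum_congr rfl
    intro w _
    simp [Fin.consEquiv, List.ofFn_succ, List.replicate_succ', List.append_assoc]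

lemma auxT_top (k n : ℕ) (f : List Bool → ℤ) : auxT k k n f = 0 := by
  unfold auxT
  apply Finset.sum_eq_zero
  intro w _
  rw [if_pos]
  exact (List.prefix_append _ _).isInfix

lemma auxT_zero (k j : ℕ) (hj : j < k) (f : List Bool → ℤ) : auxT k j 0 f = f [] := by
  unfold auxT
  simp only [List.ofFn_zero, List.append_nil, Finset.univ_unique, Finset.sum_singleton]
  rw [if_neg]
  intro h
  have := h.length_le
  simp at this
  omega

lemma auxT_add (k j n : ℕ) (f g : List Bool → ℤ) :
    auxT k j n (fun w => f w + g w) = auxT k j n f + auxT k j n g := by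
  unfold auxT
  rw [← Finset.sum_add_distrib]
  apply Finset.sum_congr rfl
  intro w _
  split_ifs <;> simp

lemma auxT_mul (k j n : ℕ) (c : ℤ) (f : List Bool → ℤ) :
    auxT k j n (fun w => c * f w) = c * auxT k j n f := by
  unfold auxT
  rw [Finset.mul_sum]
  apply Finset.sum_congr rfl
  intro w _
  split_ifs <;> simp

lemma aux_runs (w : List Bool) : ∀ c : Bool, (c :: w).count true
    = ((c :: w).zip w).count (true, true) + auxG c w + (if c then 1 else 0) := by
  induction w with
  | nil => intro c; cases c <;> simp [auxG]
  | cons a w ih =>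
    intro c
    have := ih a
    rw [List.count_cons, this, List.zip_cons_cons, List.count_cons]
    cases a <;> cases c <;> simp [auxG] <;> omega

lemma wRuns_eq (w : List Bool) : wRuns w = auxG false w := by
  cases w with
  | nil => simp [wRuns, auxG]
  | cons a w =>
    have := aux_runs w a
    unfold wRuns
    rw [this]
    cases a <;> simp [auxG] <;> omega

lemma aux_solve (P : PowerSeries ℤ) : ∀ (m : ℕ) (a : ℕ → PowerSeries ℤ),
    (∀ j < m, a j = P + PowerSeries.X * a (j+1)) → a m = 0 →
    (1 - PowerSeries.X) * a 0 = P * (1 - PowerSeries.X ^ m) := by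
  intro m
  induction m with
  | zero => intro a _ h; simp [h]
  | succ m ih =>
    intro a h h0
    have h1 := ih (fun j => a (j+1)) (fun j hj => h (j+1) (by omega)) h0
    have h2 := h 0 (by omega)
    simp only [zero_add] at h1 h2
    rw [h2]
    linear_combination PowerSeries.X * h1

/-- Generating function of `auxT`. -/
noncomputable def auxP (k j : ℕ) (f : List Bool → ℤ) : PowerSeries ℤ :=
  PowerSeries.mk (fun n => auxT k j n f)

lemma auxP_rec (k j : ℕ) (hj : j < k) (f : List Bool → ℤ) :
    auxP k j f = PowerSeries.C (f []) + PowerSeries.X * (auxP k 0 (fun w => f (false :: w))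
      + auxP k (j+1) (fun w => f (true :: w))) := by
  ext n
  cases n with
  | zero => simp [auxP, auxT_zero k j hj]
  | succ n =>
    simp [-eq_intCast, auxP, auxT_succ k j n hj, PowerSeries.coeff_succ_X_mul, PowerSeries.coeff_C]

lemma auxP_top (k : ℕ) (f : List Bool → ℤ) : auxP k k f = 0 := by
  ext n; simp [auxP, auxT_top]

lemma auxP_add (k j : ℕ) (f g : List Bool → ℤ) :
    auxP k j (fun w => f w + g w) = auxP k j f + auxP k j g := by
  ext n; simp [auxP, auxT_add]

lemma auxP_mul (k j : ℕ) (c : ℤ) (f : List Bool → ℤ) :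
    auxP k j (fun w => c * f w) = PowerSeries.C c * auxP k j f := by
  ext n; simp [-eq_intCast, auxP, auxT_mul]

/-- Indicator of the empty word. -/
def auxE (w : List Bool) : ℤ := if w = [] then 1 else 0

lemma auxP_E (k j : ℕ) (hj : j < k) : auxP k j auxE = 1 := by
  have h0 : ∀ i n, auxT k i n (fun _ => 0) = 0 := by
    intro i n; simp [auxT]
  have h1 : ∀ i, auxP k i (fun _ => 0) = 0 := by
    intro i; ext n; simp [auxP, h0]
  rw [auxP_rec k j hj]
  simp [auxE, h1]

lemma auxP_one (k : ℕ) (hk : 0 < k) :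
    (1 - 2 * PowerSeries.X + PowerSeries.X ^ (k + 1)) * auxP k 0 (fun _ => 1)
      = 1 - PowerSeries.X ^ k := by
  have := aux_solve (1 + PowerSeries.X * auxP k 0 (fun _ => 1)) k
    (fun j => auxP k j (fun _ => 1)) (fun j hj => by
      have := auxP_rec k j hj (fun _ => 1)
      simp only [map_one] at this
      linear_combination this) (auxP_top k _)
  simp only at this
  linear_combination this

lemma auxL_false (w : List Bool) : auxL (false :: w) = auxL w + auxE w := by
  cases w <;> simp [auxL, auxE, indLast]

lemma auxL_true (w : List Bool) : auxL (true :: w) = auxL w := by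
  cases w <;> simp [auxL, indLast]

lemma auxP_L (k : ℕ) (hk : 0 < k) :
    (1 - 2 * PowerSeries.X + PowerSeries.X ^ (k + 1)) * auxP k 0 auxL
      = PowerSeries.X * (1 - PowerSeries.X ^ k) := by
  have := aux_solve (PowerSeries.X + PowerSeries.X * auxP k 0 auxL) k
    (fun j => auxP k j auxL) (fun j hj => by
      have := auxP_rec k j hj auxL
      simp only [auxL_false, auxL_true, auxP_add, auxP_E k 0 hk] at this
      have h0 : auxL [] = 0 := by simp [auxL, indLast]
      rw [h0, map_zero] at this
      linear_combination this) (auxP_top k _)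
  linear_combination this

lemma auxP_S (m : ℕ) :
    (1 - 2 * PowerSeries.X + PowerSeries.X ^ (m + 1 + 1))
        * auxP (m+1) 0 (fun w => (auxG false w : ℤ))
      = (1 - PowerSeries.X) * ((1 - PowerSeries.X) * auxP (m+1) 0 (fun _ => 1) - 1) := by
  have h1 := aux_solve (PowerSeries.X * auxP (m+1) 0 (fun w => (auxG false w : ℤ))) m
    (fun j => auxP (m+1) (j+1) (fun w => (auxG true w : ℤ))) (fun j hj => by
      have := auxP_rec (m+1) (j+1) (by omega) (fun w => (auxG true w : ℤ))
      simp only [auxG, if_true, zero_add, Nat.cast_zero, map_zero] at this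
      linear_combination this) (auxP_top (m+1) _)
  have h2 := auxP_rec (m+1) 0 (by omega) (fun w => (auxG false w : ℤ))
  have h3 := auxP_rec (m+1) 0 (by omega) (fun _ => 1)
  simp only [auxG, Nat.cast_add, auxP_add, Nat.cast_zero, map_zero, map_one, zero_add,
    Bool.false_eq_true, if_false, Nat.cast_one] at h1 h2 h3
  linear_combination PowerSeries.X * h1 + (1 - PowerSeries.X) * h2
    - (1 - PowerSeries.X) * h3

lemma auxP_H (k : ℕ) (hk : 0 < k) :
    auxP k 0 (fun w => (indHead false w : ℤ)) = PowerSeries.X * auxP k 0 (fun _ => 1) := by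
  have h0 : auxP k 1 (fun _ => 0) = 0 := by
    ext n; simp [auxP, auxT]
  rw [auxP_rec k 0 hk]
  simp [indHead, h0]

lemma aux_total (k : ℕ) (hk : 0 < k) :
    PowerSeries.mk (fun n =>
          if n = 0 then 0 else ∑ w ∈ kbonWords n k, (wDeg2 (List.ofFn w) : ℤ))
    = PowerSeries.C 2 * auxP k 0 (fun _ => 1) - PowerSeries.C 2
      + PowerSeries.C 2 * auxP k 0 (fun w => (auxG false w : ℤ))
      + auxP k 0 (fun w => (indHead false w : ℤ)) + auxP k 0 auxL := by
  have key : auxP k 0 (fun w => (wDeg2 w : ℤ)) = PowerSeries.C 2 * auxP k 0 (fun _ => 1)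
      + PowerSeries.C 2 * auxP k 0 (fun w => (auxG false w : ℤ))
      + auxP k 0 (fun w => (indHead false w : ℤ)) + auxP k 0 auxL := by
    rw [← auxP_mul, ← auxP_mul, ← auxP_add, ← auxP_add, ← auxP_add]
    congr 1
    funext w
    simp [wDeg2, wRuns_eq, auxL]
  have : PowerSeries.mk (fun n =>
          if n = 0 then 0 else ∑ w ∈ kbonWords n k, (wDeg2 (List.ofFn w) : ℤ))
      = auxP k 0 (fun w => (wDeg2 w : ℤ)) - PowerSeries.C 2 := by
    ext n
    cases n with
    | zero => simp [map_ofNat, auxP, auxT_zero k 0 hk, wDeg2, wRuns, indHead, indLast]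
    | succ n =>
      simp [-eq_intCast, auxP, auxT, kbonWords, PowerSeries.coeff_C, Finset.sum_filter, ite_not]
  rw [this, key]
  ring


theorem total_degree2_gf (k : ℕ) (hk : 2 ≤ k) :
    (1 - 2 * PowerSeries.X + PowerSeries.X ^ (k + 1)) ^ 2
      * PowerSeries.mk (fun n =>
          if n = 0 then 0 else ∑ w ∈ kbonWords n k, (wDeg2 (List.ofFn w) : ℤ))
    = 2 * (PowerSeries.C (4 : ℤ) * PowerSeries.X
        - PowerSeries.C (7 : ℤ) * PowerSeries.X ^ 2
        - PowerSeries.C (2 : ℤ) * PowerSeries.X ^ k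
        + PowerSeries.X ^ (k + 1)
        + PowerSeries.C (7 : ℤ) * PowerSeries.X ^ (k + 2)
        - PowerSeries.X ^ (2 * k + 1)
        - PowerSeries.C (2 : ℤ) * PowerSeries.X ^ (2 * k + 2)) := by
  obtain ⟨m, rfl⟩ : ∃ m, k = m + 1 := ⟨k - 1, by omega⟩
  rw [aux_total (m+1) (by omega), auxP_H (m+1) (by omega)]
  have h1 := auxP_one (m+1) (by omega)
  have h2 := auxP_L (m+1) (by omega)
  have h3 := auxP_S m
  have c2 : (PowerSeries.C (2 : ℤ) : PowerSeries ℤ) = 2 := map_ofNat _ 2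
  have c4 : (PowerSeries.C (4 : ℤ) : PowerSeries ℤ) = 4 := map_ofNat _ 4
  have c7 : (PowerSeries.C (7 : ℤ) : PowerSeries ℤ) = 7 := map_ofNat _ 7
  rw [c2, c4, c7]
  generalize auxP (m+1) 0 (fun _ => 1) = N at *
  generalize auxP (m+1) 0 auxL = L at *
  generalize auxP (m+1) 0 (fun w => (auxG false w : ℤ)) = S at *
  generalize hD : (1 - 2 * PowerSeries.X + PowerSeries.X ^ (m + 1 + 1) : PowerSeries ℤ) = D at *
  have : D ^ 2 * (2 * N - 2 + 2 * S + PowerSeries.X * N + L)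
      = 2 * D * (1 - PowerSeries.X ^ (m+1)) - 2 * D ^ 2
        + 2 * (1 - PowerSeries.X) * ((1 - PowerSeries.X) * (1 - PowerSeries.X ^ (m+1)) - D)
        + 2 * PowerSeries.X * (1 - PowerSeries.X ^ (m+1)) * D := by
    linear_combination (2 * D + PowerSeries.X * D + 2 * (1 - PowerSeries.X) ^ 2) * h1
      + D * h2 + 2 * D * h3
  rw [this, ← hD]
  ring
end

section
/- For every integer k ≥ 2, let h_{n,k} be the number of words in F_{n,k} in which every maximal run of consecutive 1's has odd length (the paper proves these are exactly the k-bonacci words whose k-bonacci graph possesses a Hamiltonian cycle). Then the following identity of formal power series in x over ℤ holds: (1 − x − 2x² + x³ + x^{2⌊k/2⌋+2}) · Σ_{n≥1} h_{n,k}·xⁿ = x·(1 + x)·(2 − x − x^{2⌊k/2⌋}). In other words, the generating function for the total number of Hamiltonian k-bonacci graphs is H_k(x) = x(1+x)(2 − x − x^{2⌊k/2⌋})/(1 − x − 2x² + x³ + x^{2⌊k/2⌋+2}). -/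
open Finset

/-- The list of lengths of the maximal runs (blocks) of consecutive `1`s in a binary word. -/
def runLengths : List Bool → List ℕ
  | [] => []
  | false :: l => runLengths l
  | true :: l => ((l.takeWhile (· = true)).length + 1) :: runLengths (l.dropWhile (· = true))
termination_by l => l.length
decreasing_by
  · simp
  · exact Nat.lt_succ_of_le ((List.dropWhile_sublist _).length_le)

/-- Every maximal run of consecutive `1`s in `w` has odd length. -/
def allRunsOdd (w : List Bool) : Prop := ∀ r ∈ runLengths w, Odd r

instance (w : List Bool) : Decidable (allRunsOdd w) := by
  unfold allRunsOdd; infer_instance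

/-- `h_{n,k}`: the number of words in `F_{n,k}` all of whose maximal runs of `1`s have odd
length; by the paper these are exactly the words whose `k`-bonacci graph is Hamiltonian. -/
def hamCount (n k : ℕ) : ℕ :=
  ((kbonWords n k).filter (fun w => allRunsOdd (List.ofFn w))).card

def okRun (m j : ℕ) : Prop := j = 0 ∨ (j % 2 = 1 ∧ j < 2 * m)

instance (m j : ℕ) : Decidable (okRun m j) := by unfold okRun; infer_instance

def goodFrom (m : ℕ) : ℕ → List Bool → Prop
  | j, [] => okRun m j
  | j, false :: l => okRun m j ∧ goodFrom m 0 l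
  | j, true :: l => goodFrom m (j + 1) l

lemma prefix_aux (l : List Bool) : ∀ k j : ℕ,
    (List.replicate k true <+: List.replicate j true ++ false :: l) ↔ k ≤ j
  | 0, j => by simp
  | k + 1, 0 => by simp [List.replicate_succ, List.cons_prefix_cons]
  | k + 1, j + 1 => by
    simp [List.replicate_succ, List.cons_prefix_cons, prefix_aux l k j]

lemma infix_aux (l : List Bool) (k : ℕ) (hk : 2 ≤ k) : ∀ j : ℕ,
    (List.replicate k true <:+: List.replicate j true ++ false :: l) ↔
      (k ≤ j ∨ List.replicate k true <:+: l)
  | 0 => by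
    have := prefix_aux l k 0
    simp only [List.replicate_zero, List.nil_append] at this ⊢
    rw [List.infix_cons_iff, this]
  | j + 1 => by
    have h := prefix_aux l k (j + 1)
    have ih := infix_aux l k hk j
    rw [List.replicate_succ, List.cons_append] at h ⊢
    rw [List.infix_cons_iff, h, ih]
    constructor
    · rintro (h | h | h)
      · exact Or.inl h
      · left; omega
      · exact Or.inr h
    · rintro (h | h)
      · exact Or.inl h
      · exact Or.inr (Or.inr h)

lemma runs_nil (j : ℕ) : runLengths (List.replicate j true) = if j = 0 then [] else [j] := by
  cases j with
  | zero => simp [runLengths]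
  | succ j => simp [List.replicate_succ, runLengths, List.takeWhile_replicate,
      List.dropWhile_replicate]

lemma runs_cons (j : ℕ) (l : List Bool) :
    runLengths (List.replicate j true ++ false :: l) =
      (if j = 0 then [] else [j]) ++ runLengths l := by
  cases j with
  | zero => simp [runLengths]
  | succ j => 
    have h1 : (List.replicate j true ++ false :: l).takeWhile (· = true)
        = List.replicate j true := by
      induction j with
      | zero => simp
      | succ j ih => simpa [List.replicate_succ] using ih
    have h2 : (List.replicate j true ++ false :: l).dropWhile (· = true)
        = false :: l := by
      clear h1
      induction j with
      | zero => simp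
      | succ j ih => simpa [List.replicate_succ] using ih
    rw [List.replicate_succ, List.cons_append, runLengths, h1, h2, runLengths]
    simp

lemma good_iff (k : ℕ) (hk : 2 ≤ k) (l : List Bool) : ∀ j,
    goodFrom (k / 2) j l ↔ (¬ (List.replicate k true <:+: List.replicate j true ++ l) ∧
      allRunsOdd (List.replicate j true ++ l)) := by
  induction l with
  | nil =>
    intro j
    have h : (List.replicate k true <:+: List.replicate j true) ↔ k ≤ j := by
      constructor
      · intro h; simpa using h.length_le
      · intro h
        refine ⟨[], List.replicate (j - k) true, ?_⟩
        simp; omega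
    simp only [goodFrom, List.append_nil, allRunsOdd, runs_nil, h, okRun]
    by_cases hj : j = 0
    · simp [hj]; omega
    · simp [hj, Nat.odd_iff]; omega
  | cons b l ih =>
    intro j
    cases b with
    | false =>
      have h0 := ih 0
      simp only [List.replicate_zero, List.nil_append] at h0
      simp only [goodFrom, allRunsOdd, runs_cons, infix_aux l k hk j, okRun, h0]
      by_cases hj : j = 0
      · have : ¬ k ≤ 0 := by omega
        simp [hj, this]
      · simp only [hj, if_false, false_or, List.singleton_append, List.forall_mem_cons,
          Nat.odd_iff, not_or]
        constructor
        · rintro ⟨⟨a, b⟩, c, d⟩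
          exact ⟨⟨by omega, c⟩, a, d⟩
        · rintro ⟨⟨b, c⟩, a, d⟩
          exact ⟨⟨a, by omega⟩, c, d⟩
    | true =>
      have h : List.replicate j true ++ true :: l = List.replicate (j + 1) true ++ l := by
        rw [List.replicate_succ', List.append_assoc]; rfl
      rw [h, ← ih (j + 1)]
      rfl

open Classical in
noncomputable def cnt (m j n : ℕ) : ℤ :=
  ∑ w : Fin n → Bool, if goodFrom m j (List.ofFn w) then 1 else 0

lemma cnt_zero (m j : ℕ) : cnt m j 0 = if okRun m j then 1 else 0 := by
  simp [cnt, goodFrom]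

lemma cnt_succ (m j n : ℕ) :
    cnt m j (n + 1) = (if okRun m j then 1 else 0) * cnt m 0 n + cnt m (j + 1) n := by
  classical
  unfold cnt
  rw [← (Fin.consEquiv (fun _ : Fin (n + 1) => Bool)).sum_comp, Fintype.sum_prod_type,
    Fintype.sum_bool, add_comm]
  have hc : ∀ (b : Bool) (w : Fin n → Bool),
      List.ofFn ((Fin.consEquiv (fun _ : Fin (n + 1) => Bool)) (b, w)) = b :: List.ofFn w := by
    intro b w
    simp [Fin.consEquiv, List.ofFn_succ]
  simp only [hc, goodFrom]
  congr 1
  by_cases h : okRun m j <;> simp [h]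

lemma cnt_big (m n : ℕ) (hm : 1 ≤ m) : ∀ j, 2 * m ≤ j → cnt m j n = 0 := by
  induction n with
  | zero => intro j hj; rw [cnt_zero, if_neg]; unfold okRun; omega
  | succ n ih =>
    intro j hj
    rw [cnt_succ, ih (j + 1) (by omega), if_neg]
    · simp
    · unfold okRun; omega

lemma hamCount_eq (n k : ℕ) (hk : 2 ≤ k) : (hamCount n k : ℤ) = cnt (k / 2) 0 n := by
  classical
  unfold hamCount kbonWords cnt
  rw [Finset.filter_filter, Finset.card_filter]
  push_cast
  refine Finset.sum_congr rfl fun w _ => ?_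
  have := good_iff k hk (List.ofFn w) 0
  simp only [List.replicate_zero, List.nil_append] at this
  simp only [this]

open PowerSeries in
lemma gf_step (m j : ℕ) : PowerSeries.mk (cnt m j) =
    (if okRun m j then 1 else 0) * (1 + X * PowerSeries.mk (cnt m 0))
      + X * PowerSeries.mk (cnt m (j + 1)) := by
  ext n
  cases n with
  | zero => 
    rw [coeff_mk, cnt_zero]
    split_ifs <;> simp
  | succ n =>
    rw [coeff_mk, cnt_succ]
    split_ifs <;> simp [coeff_succ_X_mul, coeff_one]

open PowerSeries in
lemma gf_iter (m N : ℕ) : PowerSeries.mk (cnt m 0) =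
    (∑ j ∈ range N, (if okRun m j then (X : PowerSeries ℤ) ^ j else 0))
        * (1 + X * PowerSeries.mk (cnt m 0))
      + X ^ N * PowerSeries.mk (cnt m N) := by
  induction N with
  | zero => simp
  | succ N ih =>
    rw [sum_range_succ]
    have h := gf_step m N
    have e : (if okRun m N then (X : PowerSeries ℤ) ^ N else 0)
        = X ^ N * (if okRun m N then 1 else 0) := by split_ifs <;> simp
    rw [e]
    linear_combination ih + X ^ N * h

open PowerSeries in
lemma gf_sum (m : ℕ) : ∀ M, M + 1 ≤ m →
    (1 - X ^ 2) * (∑ j ∈ range (2 * (M + 1)), (if okRun m j then (X : PowerSeries ℤ) ^ j else 0))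
      = 1 - X ^ 2 + X - X ^ (2 * (M + 1) + 1) := by
  intro M
  induction M with
  | zero =>
    intro h
    have h0 : okRun m 0 := Or.inl rfl
    have h1 : okRun m 1 := Or.inr ⟨rfl, by omega⟩
    simp [sum_range_succ, h0, h1]
    ring
  | succ M ih =>
    intro h
    have h0 : ¬ okRun m (2 * (M + 1)) := by unfold okRun; omega
    have h1 : okRun m (2 * (M + 1) + 1) := by unfold okRun; omega
    rw [show 2 * (M + 1 + 1) = 2 * (M + 1) + 1 + 1 by ring, sum_range_succ, sum_range_succ,
      if_neg h0, if_pos h1, add_zero, mul_add, ih (by omega)]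
    ring

theorem hamiltonian_kbonacci_gf (k : ℕ) (hk : 2 ≤ k) :
    (1 - PowerSeries.X - 2 * PowerSeries.X ^ 2 + PowerSeries.X ^ 3
        + PowerSeries.X ^ (2 * (k / 2) + 2))
      * PowerSeries.mk (fun n => if n = 0 then 0 else (hamCount n k : ℤ))
    = PowerSeries.X * (1 + PowerSeries.X)
        * (2 - PowerSeries.X - PowerSeries.X ^ (2 * (k / 2))) := by
  have e : PowerSeries.mk (fun n => if n = 0 then 0 else (hamCount n k : ℤ))
      = PowerSeries.mk (cnt (k / 2) 0) - 1 := by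
    ext n
    cases n with
    | zero =>
      have h0 : okRun (k / 2) 0 := Or.inl rfl
      simp [cnt_zero, h0]
    | succ n => simp [hamCount_eq _ _ hk, PowerSeries.coeff_one]
  rw [e]
  obtain ⟨M, hM⟩ : ∃ M, k / 2 = M + 1 := ⟨k / 2 - 1, by omega⟩
  have h1 := gf_iter (k / 2) (2 * (k / 2))
  have h2 := gf_sum (k / 2) M (by omega)
  rw [← hM] at h2
  have h3 : PowerSeries.mk (cnt (k / 2) (2 * (k / 2))) = 0 := by
    ext n
    simp [cnt_big (k / 2) n (by omega) (2 * (k / 2)) le_rfl]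
  rw [h3, mul_zero, add_zero] at h1
  generalize (∑ j ∈ range (2 * (k / 2)),
    (if okRun (k / 2) j then (PowerSeries.X : PowerSeries ℤ) ^ j else 0)) = S at *
  generalize PowerSeries.mk (cnt (k / 2) 0) = A at *
  linear_combination (1 - PowerSeries.X ^ 2) * h1 + (1 + PowerSeries.X * A) * h2
end
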